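/- arXiv:2307.09461 — 2 statements merged into one kernel-verified Lean document; each statement's English description precedes it below -/
import Mathlib

section
/- Let D be a finite oriented graph with vertex set {1, …, a}, let k and ℓ be positive integers, fix ε with 0 < ε < 1/(4ℓ), and set p = n^{ε−1}. Then, as n → ∞, the probability that a random oriented graph D̂ drawn from 𝒟(n, p) satisfies |D̂/𝒜| ≥ n for every large set 𝒜 ⊆ V(D_0) tends to 1. -/
open MeasureTheory

/-- An oriented graph on vertex type `V`: a loopless digraph in which for every pair of
vertices at most one of the two opposite arcs is present, encoded as an irreflexive,
asymmetric adjacency relation. -/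
structure OrientedGraph (V : Type) where
  Adj : V → V → Prop
  irrefl : ∀ v, ¬ Adj v v
  asymm : ∀ u v, Adj u v → ¬ Adj v u

/-- The vertex set `V₁ ∪ ⋯ ∪ V_a` of the blown-up graph `D₀`, where
`V_i = {i} × Fin n` has size `n`. -/
abbrev Vtx (a n : ℕ) : Type := Fin a × Fin n

/-- The part `V_i` of the vertex set of `D₀`. -/
def cellV (a n : ℕ) (i : Fin a) : Set (Vtx a n) := {x | x.1 = i}

/-- A sample point: for each potential arc of `D₀`, whether it is included. -/
abbrev Omega (a n : ℕ) : Type := Vtx a n × Vtx a n → Bool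

/-- The Bernoulli measure on `Bool` with success probability `p`. -/
noncomputable def bernoulliBool (p : ℝ) : Measure Bool :=
  ENNReal.ofReal p • Measure.dirac true + ENNReal.ofReal (1 - p) • Measure.dirac false

/-- The random oriented graph model `𝒟(n, p)`: each potential arc of `D₀` is included
independently with probability `p` (product of Bernoulli measures). -/
noncomputable def model (a n : ℕ) (p : ℝ) : Measure (Omega a n) :=
  Measure.pi fun _ : Vtx a n × Vtx a n => bernoulliBool p

/-- The random spanning subgraph `D̂` of `D₀` determined by the sample point `ω`: the arc
`x → y` is present iff `x ∈ V_i`, `y ∈ V_j` for an arc `i → j` of `D` and `ω` selects the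
pair `(x, y)`. -/
def Dhat {a : ℕ} (D : OrientedGraph (Fin a)) (n : ℕ) (ω : Omega a n) :
    OrientedGraph (Vtx a n) where
  Adj x y := D.Adj x.1 y.1 ∧ ω (x, y) = true
  irrefl x h := D.irrefl x.1 h.1
  asymm x y h h' := D.asymm x.1 y.1 h.1 h'.1

/-- `S` is the arc set of a directed cycle of length `m` in `G`; directed cycles are
counted up to cyclic rotation, and a directed cycle is uniquely determined (up to
rotation) by its arc set. -/
def IsCycleArcSet {V : Type} (G : OrientedGraph V) (m : ℕ) (S : Set (V × V)) : Prop :=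
  ∃ c : ZMod m → V, Function.Injective c ∧ (∀ i, G.Adj (c i) (c (i + 1))) ∧
    S = Set.range fun i => (c i, c (i + 1))

/-- `S` is the arc set of a directed cycle of length less than `ℓ` in `G`. -/
def IsShortCycleArcSet {V : Type} (G : OrientedGraph V) (ℓ : ℕ) (S : Set (V × V)) : Prop :=
  ∃ m : ℕ, 0 < m ∧ m < ℓ ∧ IsCycleArcSet G m S

/-- The number of directed cycles of length less than `ℓ` in `G`, counted up to cyclic
rotation (i.e. the number of their arc sets). -/
noncomputable def numShortCycles {V : Type} (G : OrientedGraph V) (ℓ : ℕ) : ℕ :=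
  Nat.card {S : Set (V × V) // IsShortCycleArcSet G ℓ S}

/-- The vertex `x` lies on the (cycle with) arc set `S`. -/
def OnArcSet {V : Type} (S : Set (V × V)) (x : V) : Prop :=
  ∃ y, (x, y) ∈ S ∨ (y, x) ∈ S

/-- `i → j` is a good arc (of `D`) for the set `A ⊆ V(D₀)`: `i`, `j` are distinct,
`ij ∈ A(D)`, and `A` meets each of `V_i`, `V_j` in at least `n/k` vertices. -/
def GoodArc {a : ℕ} (D : OrientedGraph (Fin a)) (n k : ℕ) (A : Set (Vtx a n))
    (i j : Fin a) : Prop :=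
  i ≠ j ∧ D.Adj i j ∧
    (n : ℝ) / k ≤ Nat.card (A ∩ cellV a n i : Set (Vtx a n)) ∧
    (n : ℝ) / k ≤ Nat.card (A ∩ cellV a n j : Set (Vtx a n))

/-- `A ⊆ V(D₀)` is large: some arc of `D` is a good arc for `A`. -/
def IsLarge {a : ℕ} (D : OrientedGraph (Fin a)) (n k : ℕ) (A : Set (Vtx a n)) : Prop :=
  ∃ i j : Fin a, GoodArc D n k A i j

/-- `|D̂/A|`: the minimum, over all good arcs `i → j` for `A`, of the number of arcs of
`D̂` from `A ∩ V_i` to `A ∩ V_j`. -/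
noncomputable def quotCount {a : ℕ} (D : OrientedGraph (Fin a)) (n k : ℕ)
    (ω : Omega a n) (A : Set (Vtx a n)) : ℕ :=
  sInf {m : ℕ | ∃ i j : Fin a, GoodArc D n k A i j ∧
    m = Nat.card {p : Vtx a n × Vtx a n //
      p.1 ∈ A ∩ cellV a n i ∧ p.2 ∈ A ∩ cellV a n j ∧ (Dhat D n ω).Adj p.1 p.2}}

lemma bern_prob (p : ℝ) (h0 : 0 ≤ p) (h1 : p ≤ 1) : IsProbabilityMeasure (bernoulliBool p) := by
  constructor
  simp only [bernoulliBool, Measure.coe_add, Measure.coe_smul, Pi.add_apply, Pi.smul_apply,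
    measure_univ, smul_eq_mul, mul_one]
  rw [← ENNReal.ofReal_add h0 (by linarith)]
  simp

lemma chernoff {E : Type} [Fintype E] [DecidableEq E] (p : ℝ) (h0 : 0 ≤ p) (h1 : p ≤ 1)
    (S : Finset E) (n : ℕ) :
    (Measure.pi fun _ : E => bernoulliBool p) {ω : E → Bool | (S.filter fun e => ω e = true).card < n}
      ≤ ENNReal.ofReal (2 ^ n * Real.exp (-(p / 2 * S.card))) := by
  have := bern_prob p h0 h1
  let f : E → Bool → ENNReal := fun e b => if e ∈ S ∧ b = true then ENNReal.ofReal (1/2) else 1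
  have hf : ∀ e, ∫⁻ b, f e b ∂(bernoulliBool p) =
      if e ∈ S then ENNReal.ofReal (1 - p / 2) else 1 := by
    intro e
    rw [bernoulliBool, lintegral_add_measure, lintegral_smul_measure, lintegral_smul_measure,
      lintegral_dirac, lintegral_dirac]
    by_cases h : e ∈ S
    · simp only [f, h, smul_eq_mul]
      simp only [and_self, if_true, Bool.false_eq_true, and_false, if_false, mul_one]
      rw [← ENNReal.ofReal_mul h0, ← ENNReal.ofReal_add (by positivity) (by linarith)]
      congr 1; ring
    · simp only [f, h, smul_eq_mul]
      simp only [false_and, if_false, mul_one]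
      rw [← ENNReal.ofReal_add h0 (by linarith)]
      simp
  have hint : ∫⁻ ω, ∏ e, f e (ω e) ∂(Measure.pi fun _ : E => bernoulliBool p)
      = ENNReal.ofReal ((1 - p / 2) ^ S.card) := by
    have hpi : ∫⁻ ω, ∏ e, f e (ω e) ∂(Measure.pi fun _ : E => bernoulliBool p)
        = ∏ e, ∫⁻ b, f e b ∂(bernoulliBool p) := by
      simp only [lintegral_fintype]
      rw [Finset.prod_univ_sum, Fintype.piFinset_univ]
      refine Finset.sum_congr rfl fun ω _ => ?_
      rw [Measure.pi_singleton, Finset.prod_mul_distrib]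
    rw [hpi]
    simp only [hf]
    rw [Finset.prod_ite]
    simp [ENNReal.ofReal_pow (show (0:ℝ) ≤ 1 - p / 2 by linarith)]
  have hprod : ∀ ω : E → Bool, ∏ e, f e (ω e) =
      ENNReal.ofReal ((1/2) ^ (S.filter fun e => ω e = true).card) := by
    intro ω
    simp only [f]
    rw [Finset.prod_ite]
    rw [ENNReal.ofReal_pow (by norm_num)]
    simp only [Finset.prod_const]
    rw [one_pow, mul_one]
    congr 2
    ext e; simp
  have hm := mul_meas_ge_le_lintegral (μ := Measure.pi fun _ : E => bernoulliBool p)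
    (f := fun ω => ∏ e, f e (ω e)) (measurable_of_countable _) (ENNReal.ofReal ((1/2)^n))
  rw [hint] at hm
  have hsub : {ω : E → Bool | (S.filter fun e => ω e = true).card < n} ⊆
      {ω | ENNReal.ofReal ((1/2)^n) ≤ ∏ e, f e (ω e)} := by
    intro ω hω
    simp only [Set.mem_ofPred_eq] at hω ⊢
    rw [hprod]
    exact ENNReal.ofReal_le_ofReal (pow_le_pow_of_le_one (by norm_num) (by norm_num) hω.le)
  refine (measure_mono hsub).trans ?_
  have e1 : (1:ENNReal) = ENNReal.ofReal (2^n) * ENNReal.ofReal ((1/2)^n) := by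
    rw [← ENNReal.ofReal_mul (by positivity), ← mul_pow]; norm_num
  calc _ = ENNReal.ofReal (2^n) * (ENNReal.ofReal ((1/2)^n) * (Measure.pi fun _ : E => bernoulliBool p) {ω | ENNReal.ofReal ((1/2)^n) ≤ ∏ e, f e (ω e)}) := by
        rw [← mul_assoc, ← e1, one_mul]
    _ ≤ ENNReal.ofReal (2^n) * ENNReal.ofReal ((1 - p / 2) ^ S.card) := by gcongr
    _ = ENNReal.ofReal (2^n * (1 - p / 2) ^ S.card) := by
        rw [← ENNReal.ofReal_mul (by positivity)]
    _ ≤ _ := by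
        apply ENNReal.ofReal_le_ofReal
        have : (1 - p / 2) ^ S.card ≤ Real.exp (-(p / 2 * S.card)) := by
          have h3 : 1 - p / 2 ≤ Real.exp (-(p/2)) := by
            have := Real.add_one_le_exp (-(p/2)); linarith
          calc _ ≤ (Real.exp (-(p/2))) ^ S.card := pow_le_pow_left₀ (by linarith) h3 _
            _ = _ := by rw [← Real.exp_nat_mul]; congr 1; ring
        gcongr

open Classical in
/-- the candidate arcs between `A ∩ V_i` and `A ∩ V_j` -/
noncomputable def candArcs {a n : ℕ} (A : Set (Vtx a n)) (i j : Fin a) :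
    Finset (Vtx a n × Vtx a n) :=
  (Finset.univ.filter fun x => x ∈ A ∩ cellV a n i) ×ˢ
    (Finset.univ.filter fun x => x ∈ A ∩ cellV a n j)

lemma candArcs_card {a n k : ℕ} (hk : 0 < k) (D : OrientedGraph (Fin a)) (A : Set (Vtx a n)) (i j : Fin a)
    (h : GoodArc D n k A i j) : ((n : ℝ) / k) ^ 2 ≤ (candArcs A i j).card := by
  classical
  obtain ⟨-, -, h1, h2⟩ := h
  rw [Nat.card_eq_fintype_card, Fintype.card_subtype] at h1 h2
  rw [candArcs, Finset.card_product, Nat.cast_mul, sq]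
  apply mul_le_mul
  · convert h1
  · convert h2
  · positivity
  · positivity

lemma arcs_card {a n k : ℕ} (D : OrientedGraph (Fin a)) (A : Set (Vtx a n)) (i j : Fin a)
    (h : GoodArc D n k A i j) (ω : Omega a n) :
    Nat.card {p : Vtx a n × Vtx a n //
      p.1 ∈ A ∩ cellV a n i ∧ p.2 ∈ A ∩ cellV a n j ∧ (Dhat D n ω).Adj p.1 p.2} =
    ((candArcs A i j).filter fun e => ω e = true).card := by
  classical
  apply Nat.subtype_card
  rintro ⟨x, y⟩
  simp only [candArcs, Finset.mem_filter, Finset.mem_univ, true_and, Finset.mem_product, Dhat, and_assoc]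
  constructor
  swap
  · rintro ⟨hx, hy, -, hw⟩; exact ⟨hx, hy, hw⟩
  · rintro ⟨hx, hy, hw⟩
    refine ⟨hx, hy, ?_, hw⟩
    have e1 : x.1 = i := hx.2
    have e2 : y.1 = j := hy.2
    rw [e1, e2]; exact h.2.1

lemma bad_bound (a : ℕ) (D : OrientedGraph (Fin a)) (k n : ℕ) (hk : 0 < k) (p : ℝ)
    (h0 : 0 ≤ p) (h1 : p ≤ 1) :
    model a n p {ω : Omega a n | ∀ A : Set (Vtx a n), IsLarge D n k A → n ≤ quotCount D n k ω A}ᶜ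
    ≤ ENNReal.ofReal (2 ^ (a * n) * (a * a) * (2 ^ n * Real.exp (-(p / 2 * ((n : ℝ) / k) ^ 2)))) := by
  classical
  let T := Set (Vtx a n) × Fin a × Fin a
  let B : T → Set (Omega a n) := fun t => {ω | GoodArc D n k t.1 t.2.1 t.2.2 ∧
    ((candArcs t.1 t.2.1 t.2.2).filter fun e => ω e = true).card < n}
  have hsub : {ω : Omega a n | ∀ A : Set (Vtx a n), IsLarge D n k A → n ≤ quotCount D n k ω A}ᶜ ⊆
      ⋃ t ∈ (Finset.univ : Finset T), B t := by
    intro ω hω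
    simp only [Set.mem_compl_iff, Set.mem_ofPred_eq, not_forall, not_le] at hω
    obtain ⟨A, ⟨i0, j0, hA⟩, hq⟩ := hω
    have hne : {m : ℕ | ∃ i j : Fin a, GoodArc D n k A i j ∧
      m = Nat.card {p : Vtx a n × Vtx a n //
      p.1 ∈ A ∩ cellV a n i ∧ p.2 ∈ A ∩ cellV a n j ∧ (Dhat D n ω).Adj p.1 p.2}}.Nonempty :=
      ⟨_, i0, j0, hA, rfl⟩
    obtain ⟨i, j, hg, he⟩ := Nat.sInf_mem hne
    simp only [Set.mem_iUnion]
    refine ⟨(A, i, j), Finset.mem_univ _, hg, ?_⟩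
    rw [← arcs_card D A i j hg ω, ← he]
    exact hq
  have hB : ∀ t, model a n p (B t) ≤ ENNReal.ofReal (2 ^ n * Real.exp (-(p / 2 * ((n : ℝ) / k) ^ 2))) := by
    intro t
    by_cases hg : GoodArc D n k t.1 t.2.1 t.2.2
    · have hc := candArcs_card hk D _ _ _ hg
      refine (measure_mono (fun ω hω => hω.2)).trans
        ((chernoff p h0 h1 (candArcs t.1 t.2.1 t.2.2) n).trans ?_)
      apply ENNReal.ofReal_le_ofReal
      gcongr
    · have : B t = ∅ := by ext ω; simp [B, hg]
      rw [this]; simp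
  refine (measure_mono hsub).trans ((measure_biUnion_finset_le _ _).trans ?_)
  refine (Finset.sum_le_sum (fun t _ => hB t)).trans ?_
  rw [Finset.sum_const, nsmul_eq_mul,
    ENNReal.ofReal_mul (p := 2 ^ (a * n) * ((a:ℝ) * a)) (by positivity)]
  refine mul_le_mul' ?_ le_rfl
  rw [Finset.card_univ]
  have : Fintype.card T = 2 ^ (a * n) * (a * a) := by
    simp only [T, Fintype.card_prod, Fintype.card_fin, Fintype.card_set]
  rw [this, ← ENNReal.ofReal_natCast]
  push_cast
  exact le_rfl

lemma lim_aux (a k : ℕ) (hk : 0 < k) (ε : ℝ) (hε0 : 0 < ε) :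
    Filter.Tendsto (fun n : ℕ => (2:ℝ) ^ (a * n) * (a * a) *
      (2 ^ n * Real.exp (-((n:ℝ)^(ε-1) / 2 * ((n : ℝ) / k) ^ 2)))) Filter.atTop (nhds 0) := by
  have hL : Filter.Tendsto (fun n : ℕ => ((a:ℝ) * a) * Real.exp (-(n:ℝ))) Filter.atTop (nhds 0) := by
    rw [← mul_zero ((a:ℝ) * a)]
    exact (Real.tendsto_exp_neg_atTop_nhds_zero.comp tendsto_natCast_atTop_atTop).const_mul _
  have hbig : ∀ᶠ n : ℕ in Filter.atTop, ((a:ℝ) + 2) * (2 * k ^ 2) ≤ (n:ℝ) ^ ε :=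
    ((tendsto_rpow_atTop hε0).comp tendsto_natCast_atTop_atTop).eventually_ge_atTop _
  refine squeeze_zero' (Filter.Eventually.of_forall fun n => by positivity) ?_ hL
  filter_upwards [hbig, Filter.eventually_ge_atTop 1] with n hn hn1
  have hnpos : (0:ℝ) < n := by exact_mod_cast hn1
  have hkpos : (0:ℝ) < k := by exact_mod_cast hk
  have h2 : ∀ m : ℕ, (2:ℝ) ^ m ≤ Real.exp m := by
    intro m
    rw [← Real.exp_one_pow]
    exact pow_le_pow_left₀ (by norm_num) (by have := Real.add_one_le_exp 1; linarith) _
  have e : (n:ℝ)^(ε-1) / 2 * ((n : ℝ) / k) ^ 2 = n ^ ε * n / (2 * k^2) := by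
    rw [Real.rpow_sub_one hnpos.ne']; field_simp
  have h3 : ((a:ℝ) + 2) * n ≤ (n:ℝ)^(ε-1) / 2 * ((n : ℝ) / k) ^ 2 := by
    rw [e, le_div_iff₀ (by positivity)]
    nlinarith
  calc _ ≤ Real.exp ((a * n : ℕ) : ℝ) * (a * a) * (Real.exp n * Real.exp (-(((a:ℝ) + 2) * n))) := by
        gcongr
        · exact h2 _
        · exact h2 _
    _ = (a * a) * (Real.exp ((a * n : ℕ) : ℝ) * (Real.exp n * Real.exp (-(((a:ℝ) + 2) * n)))) := by ring
    _ = _ := by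
        rw [← Real.exp_add, ← Real.exp_add]; push_cast; congr 2; ring

/-- **Lemma 6.** With `0 < ε < 1/(4ℓ)` and `p = n^(ε−1)`, the probability that a random
oriented graph `D̂` drawn from `𝒟(n, p)` satisfies `|D̂/A| ≥ n` for every large set
`A ⊆ V(D₀)` tends to `1` as `n → ∞`. -/
theorem aas_large_sets_induce_many_arcs (a : ℕ) (D : OrientedGraph (Fin a)) (k ℓ : ℕ)
    (hk : 0 < k) (hℓ : 0 < ℓ) (ε : ℝ) (hε0 : 0 < ε) (hε : ε < 1 / (4 * ℓ)) :
    Filter.Tendsto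
      (fun n : ℕ => model a n ((n : ℝ) ^ (ε - 1))
        {ω : Omega a n | ∀ A : Set (Vtx a n), IsLarge D n k A → n ≤ quotCount D n k ω A})
      Filter.atTop (nhds 1) := by
  have hε1 : ε ≤ 1 := by
    have h1 : (1:ℝ) ≤ ℓ := by exact_mod_cast hℓ
    have h2 : 1 / (4 * (ℓ:ℝ)) ≤ 1 := by
      rw [div_le_one (by positivity)]; linarith
    linarith
  have hlim := ENNReal.tendsto_ofReal (lim_aux a k hk ε hε0)
  rw [ENNReal.ofReal_zero] at hlim
  have hlim2 := ENNReal.Tendsto.sub (tendsto_const_nhds (x := (1:ENNReal))) hlim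
    (Or.inl ENNReal.one_ne_top)
  rw [tsub_zero] at hlim2
  have hp : ∀ n : ℕ, 1 ≤ n → 0 ≤ (n:ℝ)^(ε-1) ∧ (n:ℝ)^(ε-1) ≤ 1 := fun n hn =>
    ⟨by positivity, Real.rpow_le_one_of_one_le_of_nonpos (by exact_mod_cast hn) (by linarith)⟩
  have hprob : ∀ n : ℕ, 1 ≤ n → IsProbabilityMeasure (model a n ((n:ℝ)^(ε-1))) := by
    intro n hn
    have := bern_prob _ (hp n hn).1 (hp n hn).2
    unfold model
    infer_instance
  refine tendsto_of_tendsto_of_tendsto_of_le_of_le' hlim2 tendsto_const_nhds ?_ ?_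
  · filter_upwards [Filter.eventually_ge_atTop 1] with n hn
    have := hprob n hn
    have hb := bad_bound a D k n hk _ (hp n hn).1 (hp n hn).2
    rw [prob_compl_eq_one_sub (Set.toFinite _).measurableSet] at hb
    exact tsub_le_iff_tsub_le.mp hb
  · filter_upwards [Filter.eventually_ge_atTop 1] with n hn
    have := hprob n hn
    exact prob_le_one
end

section
/- Let D be a finite oriented graph with vertex set {1, …, a}, let k and ℓ be positive integers, fix ε with 0 < ε < 1/(4ℓ), and set p = n^{ε−1}. Then, as n → ∞, the probability that a random oriented graph D̂ drawn from 𝒟(n, p) has the following property tends to 1: for every arc vi_0 ∈ A(D) and all nonempty sets 𝒜 ⊆ V_v and ℬ ⊆ V_{i_0} with |𝒜| = n − |ℬ|(k − 1) and |ℬ| ≤ n/k, the number of arcs of D̂ from 𝒜 to ℬ is strictly greater than min{|ℬ|, n^{εℓ}}. -/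
open MeasureTheory

lemma bernoulliBool_prob {p : ℝ} (h0 : 0 ≤ p) (h1 : p ≤ 1) :
    IsProbabilityMeasure (bernoulliBool p) := by
  constructor
  simp only [bernoulliBool, Measure.coe_add, Measure.coe_smul, Pi.add_apply, Pi.smul_apply,
    measure_univ, smul_eq_mul, mul_one]
  rw [← ENNReal.ofReal_add h0 (by linarith)]
  simp

lemma integral_bernoulliBool {p : ℝ} (h0 : 0 ≤ p) (h1 : p ≤ 1) (f : Bool → ℝ) :
    ∫ x, f x ∂(bernoulliBool p) = p * f true + (1 - p) * f false := by
  have := bernoulliBool_prob h0 h1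
  rw [integral_fintype (Integrable.of_finite)]
  simp [bernoulliBool, Measure.real, h0, h1]

/-- Chernoff type lower tail bound. -/
lemma tail_bound {ι : Type} [Fintype ι] [DecidableEq ι] {p : ℝ} (h0 : 0 ≤ p) (h1 : p ≤ 1)
    (S : Finset ι) (b : ℕ) :
    (Measure.pi fun _ : ι => bernoulliBool p).real
      {ω | (S.filter (fun i => ω i = true)).card ≤ b} ≤ Real.exp (b - p * S.card / 2) := by
  have := bernoulliBool_prob h0 h1
  set μ := (Measure.pi fun _ : ι => bernoulliBool p) with hμ
  let g : ι → Bool → ℝ := fun i x => if i ∈ S ∧ x = true then Real.exp (-1) else 1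
  have hg : ∀ ω : ι → Bool, ∏ i, g i (ω i)
      = Real.exp (-((S.filter (fun i => ω i = true)).card : ℝ)) := by
    intro ω
    have : (Finset.univ.filter (fun i => i ∈ S ∧ ω i = true)) = S.filter (fun i => ω i = true) := by
      ext i; simp
    simp only [g]
    rw [Finset.prod_ite, this]
    simp [← Real.exp_nat_mul]
  have hint : ∫ ω, ∏ i, g i (ω i) ∂μ ≤ Real.exp (-(p * S.card / 2)) := by
    rw [hμ, integral_fintype_prod_eq_prod]
    have hb : ∀ i, ∫ x, g i x ∂(bernoulliBool p) ≤ if i ∈ S then Real.exp (-(p/2)) else 1 := by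
      intro i
      rw [integral_bernoulliBool h0 h1]
      by_cases hi : i ∈ S
      · simp only [g, hi, true_and, if_true]
        have he : Real.exp (-1) ≤ 1/2 := by
          rw [Real.exp_neg]
          have := Real.add_one_le_exp (1:ℝ)
          rw [inv_le_comm₀ (Real.exp_pos _) (by norm_num)]
          norm_num at this ⊢; linarith
        have := Real.add_one_le_exp (-(p/2))
        simp
        nlinarith
      · simp [g, hi]
    calc _ ≤ ∏ i, (if i ∈ S then Real.exp (-(p/2)) else 1) := by
          apply Finset.prod_le_prod
          · intro i _
            apply integral_nonneg
            intro x; simp only [g]; positivity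
          · intro i _; exact hb i
      _ = _ := by
          rw [Finset.prod_ite]
          simp [← Real.exp_nat_mul]
          ring
  have hm := mul_meas_ge_le_integral_of_nonneg (μ := μ) (f := fun ω => ∏ i, g i (ω i))
    (Filter.Eventually.of_forall (fun ω => by
      change 0 ≤ ∏ i, g i (ω i)
      rw [hg]; positivity)) (Integrable.of_finite) (Real.exp (-(b:ℝ)))
  have hset : {ω : ι → Bool | (S.filter (fun i => ω i = true)).card ≤ b} =
      {ω | Real.exp (-(b:ℝ)) ≤ ∏ i, g i (ω i)} := by
    ext ω
    simp [hg]
  rw [hset]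
  have := hm.trans hint
  rw [sub_eq_add_neg, Real.exp_add]
  rw [Real.exp_neg, inv_mul_le_iff₀ (Real.exp_pos _)] at this
  rw [Real.exp_neg (b:ℝ)]
  exact this

lemma eventually_growth (k : ℕ) (hk : 0 < k) (ε : ℝ) (hε0 : 0 < ε) :
    ∀ᶠ n : ℕ in Filter.atTop, (1 + ((k:ℝ) + 2) * Real.log n) ≤ (n:ℝ) ^ ε / (2 * k) := by
  have hk' : (0:ℝ) < k := by exact_mod_cast hk
  have h1 : (fun x : ℝ => (1 + ((k:ℝ) + 2) * Real.log x)) =o[Filter.atTop] fun x => x ^ ε := by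
    apply Asymptotics.IsLittleO.add
    · have := isLittleO_log_rpow_atTop hε0
      refine Asymptotics.IsLittleO.trans ?_ this
      exact Real.isLittleO_const_log_atTop
    · exact (isLittleO_log_rpow_atTop hε0).const_mul_left _
  have h2 := (h1.comp_tendsto tendsto_natCast_atTop_atTop).bound
    (show (0:ℝ) < 1 / (2 * k) by positivity)
  filter_upwards [h2] with n hn
  simp only [Function.comp] at hn
  have h3 : (0:ℝ) ≤ (n:ℝ) ^ ε := by positivity
  rw [Real.norm_of_nonneg h3] at hn
  refine (le_abs_self _).trans (hn.trans (le_of_eq ?_))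
  ring

/-- The bad event attached to a choice of sets. -/
def badEv (a n k : ℕ) (v i : Fin a) (B C : Finset (Fin n)) : Set (Omega a n) :=
  {ω | B.Nonempty ∧ k * B.card ≤ n ∧ C.card = (k - 1) * B.card ∧
    (((({v} : Finset (Fin a)) ×ˢ Cᶜ) ×ˢ (({i} : Finset (Fin a)) ×ˢ B)).filter
      (fun e => ω e = true)).card ≤ B.card}

lemma badEv_bound (a n k : ℕ) (hk : 0 < k) (ε : ℝ) (hε1 : ε ≤ 1) (hn : 0 < n)
    (hg : (1 + ((k:ℝ) + 2) * Real.log n) ≤ (n:ℝ) ^ ε / (2 * k))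
    (v i : Fin a) (B C : Finset (Fin n)) (hB : B.Nonempty) :
    (model a n ((n:ℝ) ^ (ε - 1))).real (badEv a n k v i B C) ≤
      (((n:ℝ) ^ 3)⁻¹) ^ B.card * ((n:ℝ)⁻¹) ^ C.card := by
  have hn1 : (1:ℝ) ≤ n := by exact_mod_cast hn
  have hn0 : (0:ℝ) < n := by linarith
  have hk' : (1:ℝ) ≤ k := by exact_mod_cast hk
  have hp0 : (0:ℝ) ≤ (n:ℝ) ^ (ε - 1) := by positivity
  have hp1 : (n:ℝ) ^ (ε - 1) ≤ 1 := Real.rpow_le_one_of_one_le_of_nonpos hn1 (by linarith)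
  have := bernoulliBool_prob hp0 hp1
  by_cases hc : k * B.card ≤ n ∧ C.card = (k - 1) * B.card
  · obtain ⟨hc1, hc2⟩ := hc
    have hsub : badEv a n k v i B C ⊆ {ω |
      (((({v} : Finset (Fin a)) ×ˢ Cᶜ) ×ˢ (({i} : Finset (Fin a)) ×ˢ B)).filter
      (fun e => ω e = true)).card ≤ B.card} := fun ω h => h.2.2.2
    have ht := tail_bound hp0 hp1
      ((({v} : Finset (Fin a)) ×ˢ Cᶜ) ×ˢ (({i} : Finset (Fin a)) ×ˢ B)) B.card
    have hm := (measureReal_mono (μ := model a n ((n:ℝ) ^ (ε - 1))) hsub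
      (by unfold model; exact measure_ne_top _ _)).trans ht
    refine hm.trans ?_
    have hb1 : (1:ℝ) ≤ B.card := by exact_mod_cast hB.card_pos
    have hCr : (C.card : ℝ) = ((k:ℝ) - 1) * B.card := by
      rw [hc2, Nat.cast_mul, Nat.cast_pred hk]
    have hCc : ((Cᶜ).card : ℝ) = n - C.card := by
      rw [Finset.card_compl, Nat.cast_sub (Finset.card_le_univ C)]; simp
    have hc1r : (k:ℝ) * B.card ≤ n := by exact_mod_cast hc1
    have hCge : (n:ℝ) / k ≤ (Cᶜ).card := by
      rw [hCc, hCr, div_le_iff₀ (by linarith)]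
      nlinarith
    have hpn : (n:ℝ) ^ (ε - 1) * n = (n:ℝ) ^ ε := by
      rw [Real.rpow_sub_one hn0.ne']; field_simp
    have hrhs : (((n:ℝ) ^ 3)⁻¹) ^ B.card * ((n:ℝ)⁻¹) ^ C.card
        = Real.exp (-((3 * B.card + C.card) * Real.log n)) := by
      rw [← inv_pow, ← pow_mul, ← pow_add, Real.exp_neg, inv_pow]
      congr 1
      rw [mul_comm _ (Real.log n), Real.exp_mul, Real.exp_log hn0,
        ← Real.rpow_natCast]
      push_cast
      congr 1
    rw [hrhs, Real.exp_le_exp]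
    simp only [Finset.card_product, Finset.card_singleton, one_mul]
    push_cast
    have h4 : (n:ℝ) ^ ε / (2 * k) * B.card ≤
        (n:ℝ) ^ (ε - 1) * ((Cᶜ).card * B.card) / 2 := by
      rw [← hpn]
      have := mul_le_mul_of_nonneg_left hCge hp0
      have h5 := mul_le_mul_of_nonneg_right this (show (0:ℝ) ≤ B.card / 2 by positivity)
      refine le_trans (le_of_eq ?_) (h5.trans (le_of_eq ?_))
      · field_simp
      · ring
    have h6 := mul_le_mul_of_nonneg_right hg (show (0:ℝ) ≤ B.card by positivity)
    rw [hCr]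
    nlinarith
  · have : badEv a n k v i B C = ∅ := by
      ext ω
      simp only [badEv, Set.mem_ofPred_eq, Set.mem_empty_iff_false, iff_false]
      tauto
    rw [this]
    simp only [measureReal_empty]
    positivity

lemma sum_bound (n : ℕ) (hn : 0 < n) :
    ∑ B ∈ (Finset.univ : Finset (Finset (Fin n))).erase ∅, ∑ C : Finset (Fin n),
      (((n:ℝ) ^ 3)⁻¹) ^ B.card * ((n:ℝ)⁻¹) ^ C.card
      ≤ (Real.exp (((n:ℝ)^2)⁻¹) - 1) * Real.exp 1 := by
  have hn0 : (0:ℝ) < n := by exact_mod_cast hn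
  have key : ∀ x : ℝ, ∑ C : Finset (Fin n), x ^ C.card = (x + 1) ^ n := by
    intro x
    have := Finset.sum_pow_mul_eq_add_pow x 1 (Finset.univ : Finset (Fin n))
    simpa using this
  have kle : ∀ x : ℝ, 0 ≤ x → (x + 1) ^ n ≤ Real.exp (n * x) := by
    intro x hx
    rw [Real.exp_nat_mul]
    exact pow_le_pow_left₀ (by linarith) (Real.add_one_le_exp x) n
  simp_rw [← Finset.mul_sum]
  rw [← Finset.sum_mul, key, Finset.sum_erase_eq_sub (Finset.mem_univ _), key]
  have e1 := kle ((n:ℝ)^3)⁻¹ (by positivity)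
  have e2 := kle (n:ℝ)⁻¹ (by positivity)
  rw [mul_inv_cancel₀ hn0.ne'] at e2
  rw [show (n:ℝ) * ((n:ℝ)^3)⁻¹ = ((n:ℝ)^2)⁻¹ by field_simp] at e1
  simp only [Finset.card_empty, pow_zero]
  apply mul_le_mul _ e2 (by positivity)
  · have := Real.add_one_le_exp (((n:ℝ)^2)⁻¹)
    have : (0:ℝ) ≤ ((n:ℝ)^2)⁻¹ := by positivity
    linarith
  · linarith

/-- A sample point outside all bad events has the required property. -/
lemma good_of_not_bad (a n k : ℕ) (hk : 0 < k) (D : OrientedGraph (Fin a)) (ω : Omega a n)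
    (hω : ∀ v i : Fin a, ∀ B C : Finset (Fin n), ω ∉ badEv a n k v i B C)
    (v i₀ : Fin a) (hD : D.Adj v i₀) (A B : Set (Vtx a n)) (hB : B.Nonempty)
    (hAv : A ⊆ cellV a n v) (hBi : B ⊆ cellV a n i₀)
    (hA : (Nat.card A : ℝ) = n - Nat.card B * ((k : ℝ) - 1))
    (hBn : (Nat.card B : ℝ) ≤ (n : ℝ) / k) :
    Nat.card B < Nat.card {p : Vtx a n × Vtx a n //
                p.1 ∈ A ∧ p.2 ∈ B ∧ (Dhat D n ω).Adj p.1 p.2} := by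
  classical
  have hk' : (0:ℝ) < k := by exact_mod_cast hk
  let B' : Finset (Fin n) := Finset.univ.filter (fun y => (i₀, y) ∈ B)
  let A' : Finset (Fin n) := Finset.univ.filter (fun y => (v, y) ∈ A)
  have hAe : A = ((({v} : Finset (Fin a)) ×ˢ A' : Finset (Vtx a n)) : Set (Vtx a n)) := by
    ext ⟨x, y⟩
    simp only [A', Finset.coe_product, Set.mem_prod, Finset.coe_singleton, Set.mem_singleton_iff,
      Finset.coe_filter, Finset.mem_univ, true_and, Set.mem_ofPred_eq]
    constructor
    · intro h
      have : x = v := hAv h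
      subst this; exact ⟨rfl, h⟩
    · rintro ⟨rfl, h⟩; exact h
  have hBe : B = ((({i₀} : Finset (Fin a)) ×ˢ B' : Finset (Vtx a n)) : Set (Vtx a n)) := by
    ext ⟨x, y⟩
    simp only [B', Finset.coe_product, Set.mem_prod, Finset.coe_singleton, Set.mem_singleton_iff,
      Finset.coe_filter, Finset.mem_univ, true_and, Set.mem_ofPred_eq]
    constructor
    · intro h
      have : x = i₀ := hBi h
      subst this; exact ⟨rfl, h⟩
    · rintro ⟨rfl, h⟩; exact h
  have cA : Nat.card A = A'.card := by
    rw [Nat.card_coe_set_eq, hAe, Set.ncard_coe_finset]; simp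
  have cB : Nat.card B = B'.card := by
    rw [Nat.card_coe_set_eq, hBe, Set.ncard_coe_finset]; simp
  have hN := hω v i₀ B' A'ᶜ
  rw [cA, cB] at hA
  rw [cB] at hBn ⊢
  simp only [badEv, Set.mem_ofPred_eq, not_and, not_le, compl_compl] at hN
  have h1 : B'.Nonempty := by
    obtain ⟨⟨x, y⟩, h⟩ := hB
    have : x = i₀ := hBi h
    subst this
    exact ⟨y, by simp [B', h]⟩
  have h2 : k * B'.card ≤ n := by
    rw [le_div_iff₀ hk'] at hBn
    have : ((k * B'.card : ℕ) : ℝ) ≤ n := by push_cast; linarith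
    exact_mod_cast this
  have h3 : (A'ᶜ).card = (k - 1) * B'.card := by
    rw [Finset.card_compl, Fintype.card_fin]
    have hle : A'.card ≤ n := by simpa using Finset.card_le_univ A'
    have : ((n - A'.card : ℕ) : ℝ) = (((k - 1) * B'.card : ℕ) : ℝ) := by
      rw [Nat.cast_sub hle, Nat.cast_mul, Nat.cast_pred hk, hA]; ring
    exact_mod_cast this
  refine (hN h1 h2 h3).trans_le (le_of_eq ?_)
  rw [← Nat.card_eq_finsetCard]
  refine Nat.card_congr (Equiv.subtypeEquivRight ?_)
  rintro ⟨⟨x, y⟩, ⟨z, w⟩⟩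
  rw [hAe, hBe]
  simp only [Finset.mem_filter, Finset.mem_product, Finset.mem_singleton, Finset.mem_coe, Dhat]
  constructor
  · rintro ⟨⟨⟨rfl, h⟩, rfl, h'⟩, h''⟩
    exact ⟨⟨rfl, h⟩, ⟨rfl, h'⟩, hD, h''⟩
  · rintro ⟨h, h', _, h''⟩
    exact ⟨⟨h, h'⟩, h''⟩

theorem aas_arcs_into_small_sets (a : ℕ) (D : OrientedGraph (Fin a)) (k ℓ : ℕ)
    (hk : 0 < k) (hℓ : 0 < ℓ) (ε : ℝ) (hε0 : 0 < ε) (hε : ε < 1 / (4 * ℓ)) :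
    Filter.Tendsto
      (fun n : ℕ => model a n ((n : ℝ) ^ (ε - 1))
        {ω : Omega a n | ∀ v i₀ : Fin a, D.Adj v i₀ →
          ∀ A B : Set (Vtx a n), A.Nonempty → B.Nonempty →
            A ⊆ cellV a n v → B ⊆ cellV a n i₀ →
            (Nat.card A : ℝ) = n - Nat.card B * ((k : ℝ) - 1) →
            (Nat.card B : ℝ) ≤ (n : ℝ) / k →
            min (Nat.card B : ℝ) ((n : ℝ) ^ (ε * (ℓ : ℝ))) <
              (Nat.card {p : Vtx a n × Vtx a n //
                p.1 ∈ A ∧ p.2 ∈ B ∧ (Dhat D n ω).Adj p.1 p.2} : ℝ)})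
      Filter.atTop (nhds 1) := by
  have hε1 : ε ≤ 1 := by
    have : (1:ℝ) ≤ ℓ := by exact_mod_cast hℓ
    have h2 : 1 / (4 * (ℓ:ℝ)) ≤ 1 := by
      rw [div_le_one (by linarith)]; linarith
    linarith
  let F : ℕ → ℝ := fun n => (a:ℝ) * (a * ((Real.exp (((n:ℝ)^2)⁻¹) - 1) * Real.exp 1))
  have hF : Filter.Tendsto (fun n => ENNReal.ofReal (1 - F n)) Filter.atTop (nhds 1) := by
    have h1 : Filter.Tendsto (fun n : ℕ => ((n:ℝ)^2)⁻¹) Filter.atTop (nhds 0) :=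
      ((Filter.tendsto_pow_atTop (two_ne_zero)).comp tendsto_natCast_atTop_atTop).inv_tendsto_atTop
    have h2 := (Real.continuous_exp.tendsto 0).comp h1
    have h3 : Filter.Tendsto F Filter.atTop
        (nhds ((a:ℝ) * (a * ((Real.exp 0 - 1) * Real.exp 1)))) :=
      (((h2.sub_const 1).mul_const _).const_mul _).const_mul _
    have h4 := ENNReal.tendsto_ofReal (h3.const_sub 1)
    simpa using h4
  have hprob : ∀ n : ℕ, 0 < n → IsProbabilityMeasure (model a n ((n:ℝ) ^ (ε - 1))) := by
    intro n hn
    have hn1 : (1:ℝ) ≤ n := by exact_mod_cast hn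
    have := bernoulliBool_prob (p := (n:ℝ) ^ (ε - 1)) (by positivity)
      (Real.rpow_le_one_of_one_le_of_nonpos hn1 (by linarith))
    unfold model; infer_instance
  refine tendsto_of_tendsto_of_tendsto_of_le_of_le' hF tendsto_const_nhds ?_ ?_
  · filter_upwards [eventually_growth k hk ε hε0, Filter.eventually_gt_atTop 0] with n hg hn
    have := hprob n hn
    set μ := model a n ((n:ℝ) ^ (ε - 1)) with hμ
    let bad : Set (Omega a n) := ⋃ v ∈ (Finset.univ : Finset (Fin a)),
      ⋃ i ∈ (Finset.univ : Finset (Fin a)),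
      ⋃ B ∈ (Finset.univ : Finset (Finset (Fin n))).erase ∅,
      ⋃ C ∈ (Finset.univ : Finset (Finset (Fin n))), badEv a n k v i B C
    have hbad : μ.real bad ≤ F n := by
      calc μ.real bad ≤ ∑ v : Fin a, ∑ i : Fin a,
          ∑ B ∈ (Finset.univ : Finset (Finset (Fin n))).erase ∅, ∑ C : Finset (Fin n),
            (((n:ℝ) ^ 3)⁻¹) ^ B.card * ((n:ℝ)⁻¹) ^ C.card := by
            refine (measureReal_biUnion_finset_le _ _).trans (Finset.sum_le_sum fun v _ => ?_)
            refine (measureReal_biUnion_finset_le _ _).trans (Finset.sum_le_sum fun i _ => ?_)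
            refine (measureReal_biUnion_finset_le _ _).trans (Finset.sum_le_sum fun B hB => ?_)
            refine (measureReal_biUnion_finset_le _ _).trans (Finset.sum_le_sum fun C _ => ?_)
            exact badEv_bound a n k hk ε hε1 hn hg v i B C
              (Finset.nonempty_iff_ne_empty.2 (Finset.ne_of_mem_erase hB))
        _ ≤ F n := by
            simp only [Finset.sum_const, Finset.card_univ, Fintype.card_fin, nsmul_eq_mul, F]
            gcongr
            exact sum_bound n hn
    have hcompl : 1 - F n ≤ μ.real badᶜ := by
      rw [probReal_compl_eq_one_sub (Set.toFinite _).measurableSet]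
      linarith
    refine (ENNReal.ofReal_le_ofReal hcompl).trans ?_
    rw [ofReal_measureReal]
    apply measure_mono
    intro ω hω v i₀ hD A B _ hB hAv hBi hA hBn
    refine (min_le_left _ _).trans_lt ?_
    have := good_of_not_bad a n k hk D ω (fun v i B C h => hω ?_) v i₀ hD A B hB hAv hBi hA hBn
    · exact_mod_cast this
    · simp only [bad, Set.mem_iUnion]
      exact ⟨v, Finset.mem_univ _, i, Finset.mem_univ _, B,
        Finset.mem_erase.2 ⟨Finset.nonempty_iff_ne_empty.1 h.1, Finset.mem_univ _⟩,
        C, Finset.mem_univ _, h⟩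
  · filter_upwards [Filter.eventually_gt_atTop 0] with n hn
    have := hprob n hn
    exact prob_le_one
end
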